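/- Convergence of marginals for general M ≥ 2: assume a dual-optimal tuple (û^(i))_{i=1}^{M+1} exists, and set E := max_{i≤M} λ(K^(i)) and e := max_{i≤M+1} d_H(u^(0,i), û^(i)). Then for every n ≥ 1: d_H(a, P^(n,1)1_{m_2}) = 0, d_H(b, (P^(n,M))ᵀ1_{m_M}) = 0, and for every i = 1,…,M−1, d_H((P^(n,i))ᵀ1_{m_i}, P^(n,i+1)1_{m_{i+2}}) ≤ 2e(1 + E)E^{n−1}. -/

import Mathlib

/-!
The iterates contract towards `uhat` in the Hilbert metric `dH`, which in logarithmic coordinates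
is the oscillation seminorm (`dH_le_iff`).

* Setting the first variation of the dual function at its maximiser to zero shows that the plans
  induced by `uhat` are feasible (`feasibleT_of_dual_optimal`), which is the same as saying that
  `uhat` is a fixed point of every Sinkhorn update.
* Each update applies kernels `K⁽ⁱ⁾` or their transposes, followed by inversions, division into a
  fixed vector, or a geometric mean. Birkhoff's theorem (`dH_mulVec_le`) says that the kernels
  contract `dH` by `λ(K⁽ⁱ⁾) ≤ E`; the other operations do not increase it, the geometric mean
  averaging two distances. Hence `dH (u n i) (uhat i) ≤ e * E ^ n` for all `i`.
* The outer marginals are exactly `a` and `b` by the last two updates. At an inner boundary the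
  logarithm of the ratio of the two marginals is twice the logarithm of the ratio of consecutive
  iterates, so the triangle inequality through `uhat` bounds the discrepancy (`dH_marginals_le`).

Birkhoff's theorem is proved by differentiating the logarithm of the ratio of two coordinates of
`A (y · (x/y)^t)` in `t`. The derivative is a difference of averages of `log (x/y)` under two
probability vectors whose cross ratios are at most `γ(A)`; such vectors have total variation
distance at most `λ(A)` (`average_sub_le`), and the mean value theorem concludes.
-/

open Matrix Finset Real

noncomputable section

/- Throughout, the number of composed transport plans is `M = N + 2` for `N : ℕ`, which
exactly captures the assumption `M ≥ 2`.  Vectors are indexed by `1, …, M + 1 = N + 3`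
and matrices by `1, …, M = N + 2`. -/

/-- Componentwise (Frobenius) inner product `⟨X, Y⟩ = Σ_{j,k} X_{jk} Y_{jk}`. -/
def frob {m n : ℕ} (X Y : Matrix (Fin m) (Fin n) ℝ) : ℝ := ∑ j, ∑ k, X j k * Y j k

/-- The entropy `H(P) = −Σ_{j,k} P_{jk} (log P_{jk} − 1)` (with `0·log 0 = 0`,
as is the case for `Real.log`). -/
def ent {m n : ℕ} (P : Matrix (Fin m) (Fin n) ℝ) : ℝ :=
  -∑ j, ∑ k, P j k * (Real.log (P j k) - 1)

/-- Feasibility of a tuple of transportation plans for the sequentially composed OT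
problem with `M = N + 2`: the first marginal is `a`, the last is `b`, and consecutive
plans are consistent on the boundaries. -/
def FeasibleT (N : ℕ) (m : ℕ → ℕ)
    (a : Fin (m 1) → ℝ) (b : Fin (m (N+3)) → ℝ)
    (P : ∀ i : ℕ, Matrix (Fin (m i)) (Fin (m (i+1))) ℝ) : Prop :=
  (P 1 *ᵥ fun _ => 1) = a ∧ ((P (N+2))ᵀ *ᵥ fun _ => 1) = b ∧
    ∀ i : ℕ, 1 ≤ i → i ≤ N + 1 → ((P i)ᵀ *ᵥ fun _ => 1) = (P (i+1) *ᵥ fun _ => 1)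

/-- Entrywise nonnegativity of a tuple of matrices, for the relevant indices `1, …, N+2`. -/
def NonnegT (N : ℕ) (m : ℕ → ℕ)
    (P : ∀ i : ℕ, Matrix (Fin (m i)) (Fin (m (i+1))) ℝ) : Prop :=
  ∀ i : ℕ, 1 ≤ i → i ≤ N + 2 → ∀ j k, 0 ≤ P i j k

/-- The regularized primal objective `Σ_{i=1}^{M} (⟨C⁽ⁱ⁾, P⁽ⁱ⁾⟩ − ε H(P⁽ⁱ⁾))`. -/
def primalVal (N : ℕ) (m : ℕ → ℕ)
    (C : ∀ i : ℕ, Matrix (Fin (m i)) (Fin (m (i+1))) ℝ) (ε : ℝ)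
    (P : ∀ i : ℕ, Matrix (Fin (m i)) (Fin (m (i+1))) ℝ) : ℝ :=
  ∑ i ∈ Finset.Icc 1 (N+2), (frob (C i) (P i) - ε * ent (P i))

/-- The dual function `L((f⁽ⁱ⁾)_{i=1}^{M+1})` of the regularized sequentially composed OT
problem with `M = N + 2`. -/
def dualGen (N : ℕ) (m : ℕ → ℕ)
    (C : ∀ i : ℕ, Matrix (Fin (m i)) (Fin (m (i+1))) ℝ)
    (a : Fin (m 1) → ℝ) (b : Fin (m (N+3)) → ℝ) (ε : ℝ)
    (f : ∀ i : ℕ, Fin (m i) → ℝ) : ℝ :=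
  (∑ j, f 1 j * a j) + (∑ k, f (N+3) k * b k)
    - ε * ((∑ j, ∑ k, Real.exp ((f (N+2) j + f (N+3) k - C (N+2) j k) / ε))
      + ∑ i ∈ Finset.Icc 1 (N+1), ∑ j, ∑ k, Real.exp ((f i j - f (i+1) k - C i j k) / ε))

/-- The Hilbert projective (pseudo)metric on the positive orthant. -/
def dH {m : ℕ} (u v : Fin m → ℝ) : ℝ :=
  Real.log ((⨆ i, u i / v i) * (⨆ j, v j / u j))

/-- Birkhoff's ratio `γ(A)`. -/
def birkhoffGamma {n m : ℕ} (A : Matrix (Fin n) (Fin m) ℝ) : ℝ :=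
  ⨆ p : (Fin n × Fin n) × Fin m × Fin m,
    A p.1.1 p.2.1 * A p.1.2 p.2.2 / (A p.1.2 p.2.1 * A p.1.1 p.2.2)

/-- Birkhoff's contraction coefficient `λ(A) = (√γ(A) − 1)/(√γ(A) + 1)`. -/
def birkhoffLambda {n m : ℕ} (A : Matrix (Fin n) (Fin m) ℝ) : ℝ :=
  (Real.sqrt (birkhoffGamma A) - 1) / (Real.sqrt (birkhoffGamma A) + 1)

/-- The matrices induced by a tuple of Sinkhorn vectors (`M = N + 2`):
`P⁽ⁱ⁾ = diag(u⁽ⁱ⁾) K⁽ⁱ⁾ diag(1/u⁽ⁱ⁺¹⁾)` for `i ≤ M − 1`, written entrywise, and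
`P⁽ᴹ⁾ = diag(u⁽ᴹ⁾) K⁽ᴹ⁾ diag(u⁽ᴹ⁺¹⁾)`. -/
def Pmat (N : ℕ) (m : ℕ → ℕ)
    (K : ∀ i : ℕ, Matrix (Fin (m i)) (Fin (m (i+1))) ℝ)
    (u : ∀ i : ℕ, Fin (m i) → ℝ) (i : ℕ) :
    Matrix (Fin (m i)) (Fin (m (i+1))) ℝ :=
  fun j k => u i j * K i j k * (if i = N + 2 then u (i+1) k else (u (i+1) k)⁻¹)

/-! ### The Hilbert metric in logarithmic coordinates -/

/-- In logarithmic coordinates the Hilbert metric is the oscillation of `log u - log v`. -/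
lemma dH_le_iff {m : ℕ} (hm : 0 < m) {u v : Fin m → ℝ} (hu : ∀ i, 0 < u i) (hv : ∀ i, 0 < v i)
    (c : ℝ) : dH u v ≤ c ↔
      ∀ i j, (log (u i) - log (v i)) - (log (u j) - log (v j)) ≤ c := by
  have : Nonempty (Fin m) := ⟨⟨0, hm⟩⟩
  have hlog : ∀ i j, log (u i / v i * (v j / u j))
      = (log (u i) - log (v i)) - (log (u j) - log (v j)) := by
    intro i j
    rw [log_mul (div_pos (hu i) (hv i)).ne' (div_pos (hv j) (hu j)).ne',
      log_div (hu i).ne' (hv i).ne', log_div (hv j).ne' (hu j).ne']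
    ring
  unfold dH
  constructor
  · intro h i j
    refine le_trans ?_ h
    rw [← hlog]
    have h1 := le_ciSup (Set.finite_range (fun i => u i / v i)).bddAbove i
    have h2 := le_ciSup (Set.finite_range (fun j => v j / u j)).bddAbove j
    have p1 := div_pos (hu i) (hv i)
    have p2 := div_pos (hv j) (hu j)
    apply log_le_log (mul_pos p1 p2)
    exact mul_le_mul h1 h2 p2.le (p1.le.trans h1)
  · intro h
    obtain ⟨i, hi⟩ := exists_eq_ciSup_of_finite (f := fun i => u i / v i)
    obtain ⟨j, hj⟩ := exists_eq_ciSup_of_finite (f := fun j => v j / u j)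
    rw [← hi, ← hj, hlog]
    exact h i j

lemma log_osc_le_dH {m : ℕ} {u v : Fin m → ℝ} (hu : ∀ i, 0 < u i) (hv : ∀ i, 0 < v i)
    (i j : Fin m) : (log (u i) - log (v i)) - (log (u j) - log (v j)) ≤ dH u v :=
  (dH_le_iff (Fin.pos i) hu hv _).1 le_rfl i j

lemma dH_nonneg {m : ℕ} (hm : 0 < m) {u v : Fin m → ℝ} (hu : ∀ i, 0 < u i)
    (hv : ∀ i, 0 < v i) : 0 ≤ dH u v := by
  simpa using log_osc_le_dH hu hv ⟨0, hm⟩ ⟨0, hm⟩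

lemma dH_self {m : ℕ} (hm : 0 < m) {u : Fin m → ℝ} (hu : ∀ i, 0 < u i) : dH u u = 0 :=
  le_antisymm ((dH_le_iff hm hu hu _).2 (by simp)) (dH_nonneg hm hu hu)

lemma dH_inv_le {m : ℕ} (hm : 0 < m) {u v : Fin m → ℝ} (hu : ∀ i, 0 < u i)
    (hv : ∀ i, 0 < v i) : dH (fun i => (u i)⁻¹) (fun i => (v i)⁻¹) ≤ dH u v := by
  refine (dH_le_iff hm (fun i => inv_pos.2 (hu i)) (fun i => inv_pos.2 (hv i)) _).2 fun i j => ?_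
  have := log_osc_le_dH hu hv j i
  simp only [log_inv]
  linarith

lemma dH_div_le {m : ℕ} (hm : 0 < m) {a p q : Fin m → ℝ} (ha : ∀ i, 0 < a i)
    (hp : ∀ i, 0 < p i) (hq : ∀ i, 0 < q i) :
    dH (fun i => a i / p i) (fun i => a i / q i) ≤ dH p q := by
  refine (dH_le_iff hm (fun i => div_pos (ha i) (hp i)) (fun i => div_pos (ha i) (hq i)) _).2
    fun i j => ?_
  have := log_osc_le_dH hp hq j i
  simp only [log_div (ha _).ne' (hp _).ne', log_div (ha _).ne' (hq _).ne']
  linarith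

/-- Geometric means average Hilbert distances. -/
lemma dH_sqrt_div_le {m : ℕ} (hm : 0 < m) {p q p' q' : Fin m → ℝ} (hp : ∀ i, 0 < p i)
    (hq : ∀ i, 0 < q i) (hp' : ∀ i, 0 < p' i) (hq' : ∀ i, 0 < q' i) :
    dH (fun i => √(p i / q i)) (fun i => √(p' i / q' i)) ≤ (dH p p' + dH q q') / 2 := by
  refine (dH_le_iff hm (fun i => sqrt_pos.2 (div_pos (hp i) (hq i)))
    (fun i => sqrt_pos.2 (div_pos (hp' i) (hq' i))) _).2 fun i j => ?_
  have h1 := log_osc_le_dH hp hp' i j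
  have h2 := log_osc_le_dH hq hq' j i
  simp only [log_sqrt (div_pos (hp _) (hq _)).le, log_sqrt (div_pos (hp' _) (hq' _)).le,
    log_div (hp _).ne' (hq _).ne', log_div (hp' _).ne' (hq' _).ne']
  linarith

/-! ### Birkhoff's contraction theorem -/

/-- If the odds ratio of two probabilities `P`, `Q` is at most `s²`, their difference is at most
`(s - 1)/(s + 1)`. -/
lemma sub_le_of_odds_le {P Q s : ℝ} (hP0 : 0 ≤ P) (hP1 : P ≤ 1) (hQ0 : 0 ≤ Q) (hQ1 : Q ≤ 1)
    (hs : 1 ≤ s) (h : P * (1 - Q) ≤ s ^ 2 * (Q * (1 - P))) : P - Q ≤ (s - 1) / (s + 1) := by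
  -- With `A = √(P(1-Q))` and `B = √(Q(1-P))` one has `P - Q = (A - B)(A + B)`, `A ≤ s B`,
  -- and `A + B ≤ 1` by AM-GM.
  have hA2 : √(P * (1 - Q)) ^ 2 = P * (1 - Q) := sq_sqrt (mul_nonneg hP0 (by linarith))
  have hB2 : √(Q * (1 - P)) ^ 2 = Q * (1 - P) := sq_sqrt (mul_nonneg hQ0 (by linarith))
  have hA0 := sqrt_nonneg (P * (1 - Q))
  have hB0 := sqrt_nonneg (Q * (1 - P))
  set A := √(P * (1 - Q))
  set B := √(Q * (1 - P))
  have hAB : A ≤ s * B := by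
    apply le_of_sq_le_sq _ (by positivity)
    rw [mul_pow, hA2, hB2]; exact h
  have hsum : A + B ≤ 1 := by
    have hA : A ≤ (P + (1 - Q)) / 2 := by
      apply le_of_sq_le_sq _ (by linarith)
      rw [hA2]; nlinarith [sq_nonneg (P - (1 - Q))]
    have hB : B ≤ (Q + (1 - P)) / 2 := by
      apply le_of_sq_le_sq _ (by linarith)
      rw [hB2]; nlinarith [sq_nonneg (Q - (1 - P))]
    linarith
  rw [le_div_iff₀ (by linarith)]
  have h1 : P - Q = (A - B) * (A + B) := by nlinarith
  have h2 : (A - B) * (s + 1) ≤ (s - 1) * (A + B) := by nlinarith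
  calc (P - Q) * (s + 1) = ((A - B) * (s + 1)) * (A + B) := by rw [h1]; ring
    _ ≤ ((s - 1) * (A + B)) * (A + B) := mul_le_mul_of_nonneg_right h2 (by linarith)
    _ = (s - 1) * (A + B) ^ 2 := by ring
    _ ≤ (s - 1) * 1 :=
        mul_le_mul_of_nonneg_left (pow_le_one₀ (by linarith) hsum) (by linarith)
    _ = s - 1 := mul_one _

/-- Two positive weight vectors whose cross ratios are at most `s²` have normalisations at total
variation distance at most `(s - 1)/(s + 1)`, so their averages of a function of oscillation `D`
differ by at most `(s - 1)/(s + 1) * D`. -/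
lemma average_sub_le {m : ℕ} (hm : 0 < m) {α β l : Fin m → ℝ} (hα : ∀ k, 0 < α k)
    (hβ : ∀ k, 0 < β k) {s D : ℝ} (hs : 1 ≤ s)
    (hr : ∀ k k', α k * β k' ≤ s ^ 2 * (β k * α k')) (hl : ∀ k k', l k - l k' ≤ D) :
    (∑ k, α k * l k) / (∑ k, α k) - (∑ k, β k * l k) / (∑ k, β k)
      ≤ (s - 1) / (s + 1) * D := by
  classical
  have : Nonempty (Fin m) := ⟨⟨0, hm⟩⟩
  have hA : 0 < ∑ k, α k := sum_pos (fun k _ => hα k) univ_nonempty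
  have hB : 0 < ∑ k, β k := sum_pos (fun k _ => hβ k) univ_nonempty
  set A := ∑ k, α k with hAdef
  set B := ∑ k, β k with hBdef
  obtain ⟨k₀, hk₀⟩ := Finite.exists_min l
  have hD : 0 ≤ D := by simpa using hl k₀ k₀
  have hp1 : ∑ k, α k / A = 1 := by rw [← sum_div, div_self hA.ne']
  have hq1 : ∑ k, β k / B = 1 := by rw [← sum_div, div_self hB.ne']
  set S : Finset (Fin m) := univ.filter fun k => β k / B ≤ α k / A with hS
  have hsplit : ∀ f : Fin m → ℝ, ∑ k ∈ S, f k + ∑ k ∈ Sᶜ, f k = ∑ k, f k :=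
    fun f => sum_add_sum_compl S f
  have hPc : ∑ k ∈ Sᶜ, α k / A = 1 - ∑ k ∈ S, α k / A := by
    rw [← hp1, ← hsplit]; ring
  have hQc : ∑ k ∈ Sᶜ, β k / B = 1 - ∑ k ∈ S, β k / B := by
    rw [← hq1, ← hsplit]; ring
  have hp0 : ∀ k, 0 ≤ α k / A := fun k => (div_pos (hα k) hA).le
  have hq0 : ∀ k, 0 ≤ β k / B := fun k => (div_pos (hβ k) hB).le
  have hodds : (∑ k ∈ S, α k / A) * (1 - ∑ k ∈ S, β k / B)
      ≤ s ^ 2 * ((∑ k ∈ S, β k / B) * (1 - ∑ k ∈ S, α k / A)) := by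
    rw [← hPc, ← hQc, sum_mul_sum, sum_mul_sum, mul_sum]
    refine sum_le_sum fun k _ => ?_
    rw [mul_sum]
    refine sum_le_sum fun k' _ => ?_
    rw [div_mul_div_comm, div_mul_div_comm, mul_comm B A, ← mul_div_assoc]
    exact div_le_div_of_nonneg_right (hr k k') (by positivity)
  have hTV := sub_le_of_odds_le (sum_nonneg fun k _ => hp0 k)
    (by linarith [sum_nonneg (s := Sᶜ) fun k _ => hp0 k])
    (sum_nonneg fun k _ => hq0 k)
    (by linarith [sum_nonneg (s := Sᶜ) fun k _ => hq0 k]) hs hodds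
  -- Subtracting the constant `l k₀ = min l` does not change the difference of averages.
  have hshift : (∑ k, α k * l k) / A - (∑ k, β k * l k) / B
      = ∑ k, (α k / A - β k / B) * (l k - l k₀) := by
    have h : ∀ k, (α k / A - β k / B) * (l k - l k₀)
        = α k * l k / A - β k * l k / B - (α k / A - β k / B) * l k₀ := fun k => by ring
    simp only [h, sum_sub_distrib, ← sum_mul, hp1, hq1, ← sum_div]
    ring
  rw [hshift, ← hsplit]
  have h1 : ∑ k ∈ S, (α k / A - β k / B) * (l k - l k₀)
      ≤ ∑ k ∈ S, (α k / A - β k / B) * D := by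
    refine sum_le_sum fun k hk => mul_le_mul_of_nonneg_left (hl k k₀) ?_
    simp only [hS, mem_filter] at hk
    linarith [hk.2]
  have h2 : ∑ k ∈ Sᶜ, (α k / A - β k / B) * (l k - l k₀) ≤ 0 := by
    refine sum_nonpos fun k hk => mul_nonpos_of_nonpos_of_nonneg ?_ (by linarith [hk₀ k])
    simp only [hS, mem_compl, mem_filter, mem_univ, true_and, not_le] at hk
    linarith
  rw [← sum_mul, sum_sub_distrib] at h1
  have h3 := mul_le_mul_of_nonneg_right hTV hD
  linarith

/-- The two-row form of Birkhoff's theorem: the log-ratio of two weighted sums grows along the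
geodesic `t ↦ exp (t l)` at a rate given by a difference of averages of `l`. -/
lemma log_sum_exp_osc_le {m : ℕ} (hm : 0 < m) {α β l : Fin m → ℝ} (hα : ∀ k, 0 < α k)
    (hβ : ∀ k, 0 < β k) {s D : ℝ} (hs : 1 ≤ s)
    (hr : ∀ k k', α k * β k' ≤ s ^ 2 * (β k * α k')) (hl : ∀ k k', l k - l k' ≤ D) :
    (log (∑ k, α k * exp (l k)) - log (∑ k, α k))
      - (log (∑ k, β k * exp (l k)) - log (∑ k, β k)) ≤ (s - 1) / (s + 1) * D := by
  have : Nonempty (Fin m) := ⟨⟨0, hm⟩⟩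
  have hpos : ∀ {w : Fin m → ℝ}, (∀ k, 0 < w k) → ∀ t : ℝ, 0 < ∑ k, w k * exp (t * l k) :=
    fun hw t => sum_pos (fun k _ => mul_pos (hw k) (exp_pos _)) univ_nonempty
  have hder : ∀ {w : Fin m → ℝ}, (∀ k, 0 < w k) → ∀ t : ℝ,
      HasDerivAt (fun t => log (∑ k, w k * exp (t * l k)))
        ((∑ k, w k * exp (t * l k) * l k) / ∑ k, w k * exp (t * l k)) t := by
    intro w hw t
    refine HasDerivAt.log ?_ (hpos hw t).ne'
    refine HasDerivAt.fun_sum fun k _ => ?_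
    have := (((hasDerivAt_id t).mul_const (l k)).exp).const_mul (w k)
    simpa [mul_assoc] using this
  have hder2 := fun t => (hder hα t).sub (hder hβ t)
  obtain ⟨c, -, hc⟩ := exists_hasDerivAt_eq_slope _ _ (zero_lt_one' ℝ)
    (fun t _ => (hder2 t).continuousAt.continuousWithinAt) (fun t _ => hder2 t)
  have hbound := average_sub_le hm (α := fun k => α k * exp (c * l k))
    (β := fun k => β k * exp (c * l k)) (l := l) (s := s) (D := D)
    (fun k => mul_pos (hα k) (exp_pos _)) (fun k => mul_pos (hβ k) (exp_pos _)) hs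
    (fun k k' => by
      have := mul_le_mul_of_nonneg_right (hr k k')
        (mul_pos (exp_pos (c * l k)) (exp_pos (c * l k'))).le
      calc _ = α k * β k' * (exp (c * l k) * exp (c * l k')) := by ring
        _ ≤ _ := this
        _ = _ := by ring) hl
  rw [hc] at hbound
  simp at hbound
  linarith

section Birkhoff

variable {p q : ℕ} {A : Matrix (Fin p) (Fin q) ℝ}

lemma cross_ratio_le_birkhoffGamma (i j : Fin p) (k l : Fin q) :
    A i k * A j l / (A j k * A i l) ≤ birkhoffGamma A :=
  le_ciSup (f := fun p : (Fin p × Fin p) × Fin q × Fin q =>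
    A p.1.1 p.2.1 * A p.1.2 p.2.2 / (A p.1.2 p.2.1 * A p.1.1 p.2.2))
    (Set.finite_range _).bddAbove ((i, j), (k, l))

lemma one_le_birkhoffGamma (hp : 0 < p) (hq : 0 < q) (hA : ∀ i j, 0 < A i j) :
    1 ≤ birkhoffGamma A := by
  have h := cross_ratio_le_birkhoffGamma (A := A) ⟨0, hp⟩ ⟨0, hp⟩ ⟨0, hq⟩ ⟨0, hq⟩
  rwa [div_self (mul_pos (hA _ _) (hA _ _)).ne'] at h

lemma birkhoffLambda_nonneg (hp : 0 < p) (hq : 0 < q) (hA : ∀ i j, 0 < A i j) :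
    0 ≤ birkhoffLambda A := by
  have := one_le_sqrt.2 (one_le_birkhoffGamma hp hq hA)
  exact div_nonneg (by linarith) (by linarith)

lemma birkhoffLambda_le_one : birkhoffLambda A ≤ 1 :=
  div_le_one_of_le₀ (by linarith) (by positivity)

lemma birkhoffLambda_transpose : birkhoffLambda Aᵀ = birkhoffLambda A := by
  have : birkhoffGamma Aᵀ = birkhoffGamma A := by
    unfold birkhoffGamma
    refine Equiv.iSup_congr (Equiv.prodComm _ _) fun x => ?_
    simp only [transpose_apply, Equiv.prodComm_apply, Prod.fst_swap, Prod.snd_swap]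
    congr 1
    exact mul_comm _ _
  unfold birkhoffLambda
  rw [this]

lemma mulVec_pos_of_pos (hq : 0 < q) (hA : ∀ i j, 0 < A i j) {x : Fin q → ℝ}
    (hx : ∀ k, 0 < x k) (i : Fin p) : 0 < (A *ᵥ x) i := by
  have : Nonempty (Fin q) := ⟨⟨0, hq⟩⟩
  exact sum_pos (fun k _ => mul_pos (hA i k) (hx k)) univ_nonempty

/-- Birkhoff's contraction theorem: a positive matrix contracts the Hilbert metric by `λ(A)`. -/
lemma dH_mulVec_le (hp : 0 < p) (hq : 0 < q) (hA : ∀ i j, 0 < A i j) {x y : Fin q → ℝ}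
    (hx : ∀ k, 0 < x k) (hy : ∀ k, 0 < y k) :
    dH (A *ᵥ x) (A *ᵥ y) ≤ birkhoffLambda A * dH x y := by
  refine (dH_le_iff hp (mulVec_pos_of_pos hq hA hx) (mulVec_pos_of_pos hq hA hy) _).2
    fun i j => ?_
  have hγ := one_le_birkhoffGamma hp hq hA
  have hx' : ∀ i, (A *ᵥ x) i = ∑ k, A i k * y k * exp (log (x k) - log (y k)) := by
    intro i
    change ∑ k, A i k * x k = _
    refine sum_congr rfl fun k _ => ?_
    rw [exp_sub, exp_log (hx k), exp_log (hy k), mul_assoc, mul_div_cancel₀ _ (hy k).ne']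
  have hy' : ∀ i, (A *ᵥ y) i = ∑ k, A i k * y k := fun i => rfl
  simp only [hx', hy']
  refine log_sum_exp_osc_le hq (fun k => mul_pos (hA i k) (hy k))
    (fun k => mul_pos (hA j k) (hy k)) (one_le_sqrt.2 hγ) (fun k k' => ?_)
    (fun k k' => log_osc_le_dH hx hy k k')
  rw [sq_sqrt (by linarith)]
  have h := cross_ratio_le_birkhoffGamma (A := A) i j k k'
  rw [div_le_iff₀ (mul_pos (hA _ _) (hA _ _))] at h
  calc _ = A i k * A j k' * (y k * y k') := by ring
    _ ≤ _ := mul_le_mul_of_nonneg_right h (mul_pos (hy k) (hy k')).le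
    _ = _ := by ring

end Birkhoff

/-! ### First-order optimality conditions -/

/-- The right scaling vector of the `(i-1)`-st plan: `u⁽ⁱ⁾` for the last index `i = N + 3`, and
`1/u⁽ⁱ⁾` otherwise. -/
def rightScaling (N : ℕ) (m : ℕ → ℕ) (u : ∀ i : ℕ, Fin (m i) → ℝ) (i : ℕ) : Fin (m i) → ℝ :=
  fun k => if i = N + 3 then u i k else (u i k)⁻¹

section Optimality

variable {N : ℕ} {m : ℕ → ℕ}

lemma Pmat_mulVec_one (K : ∀ i : ℕ, Matrix (Fin (m i)) (Fin (m (i+1))) ℝ)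
    (u : ∀ i : ℕ, Fin (m i) → ℝ) (i : ℕ) (j : Fin (m i)) :
    (Pmat N m K u i *ᵥ fun _ => 1) j = u i j * (K i *ᵥ rightScaling N m u (i+1)) j := by
  simp only [mulVec, dotProduct, Pmat, rightScaling, mul_one, mul_sum,
    show (i + 1 = N + 3) = (i = N + 2) from propext (by omega), mul_assoc]

lemma Pmat_transpose_mulVec_one (K : ∀ i : ℕ, Matrix (Fin (m i)) (Fin (m (i+1))) ℝ)
    (u : ∀ i : ℕ, Fin (m i) → ℝ) (i : ℕ) (k : Fin (m (i+1))) :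
    ((Pmat N m K u i)ᵀ *ᵥ fun _ => 1) k = rightScaling N m u (i+1) k * ((K i)ᵀ *ᵥ u i) k := by
  simp only [mulVec, dotProduct, Pmat, rightScaling, mul_one, mul_sum, transpose_apply,
    show (i + 1 = N + 3) = (i = N + 2) from propext (by omega)]
  exact sum_congr rfl fun _ _ => by ring

/-- The derivative of the dual function along an arbitrary direction `h` vanishes at a maximiser;
here it is expressed through the induced matrices. -/
lemma first_variation_eq_zero {C K : ∀ i : ℕ, Matrix (Fin (m i)) (Fin (m (i+1))) ℝ}
    {a : Fin (m 1) → ℝ} {b : Fin (m (N+3)) → ℝ} {ε : ℝ} (hε : 0 < ε)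
    (hK : ∀ i j k, K i j k = Real.exp (-C i j k / ε))
    {v : ∀ i : ℕ, Fin (m i) → ℝ} (hv : ∀ i : ℕ, 1 ≤ i → i ≤ N + 3 → ∀ j, 0 < v i j)
    (hopt : ∀ g : ∀ i : ℕ, Fin (m i) → ℝ,
      dualGen N m C a b ε g ≤ dualGen N m C a b ε (fun i j => ε * Real.log (v i j)))
    (h : ∀ i : ℕ, Fin (m i) → ℝ) :
    (∑ j, h 1 j * a j) + (∑ k, h (N+3) k * b k)
      - ((∑ j, ∑ k, Pmat N m K v (N+2) j k * (h (N+2) j + h (N+3) k))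
        + ∑ i ∈ Finset.Icc 1 (N+1), ∑ j, ∑ k, Pmat N m K v i j k * (h i j - h (i+1) k)) = 0 := by
  have hlast : ∀ j k, exp ((ε * log (v (N+2) j) + ε * log (v (N+3) k) - C (N+2) j k) / ε)
      = Pmat N m K v (N+2) j k := by
    intro j k
    have e : (ε * log (v (N+2) j) + ε * log (v (N+3) k) - C (N+2) j k) / ε
        = log (v (N+2) j) + -C (N+2) j k / ε + log (v (N+3) k) := by
      field_simp; ring
    rw [e, exp_add, exp_add, exp_log (hv _ (by omega) (by omega) _),
      exp_log (hv _ (by omega) (by omega) _), ← hK]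
    simp [Pmat]
  have hmid : ∀ i ∈ Finset.Icc 1 (N+1), ∀ j k,
      exp ((ε * log (v i j) - ε * log (v (i+1) k) - C i j k) / ε) = Pmat N m K v i j k := by
    intro i hi j k
    rw [Finset.mem_Icc] at hi
    have e : (ε * log (v i j) - ε * log (v (i+1) k) - C i j k) / ε
        = log (v i j) + -C i j k / ε + -log (v (i+1) k) := by
      field_simp; ring
    rw [e, exp_add, exp_add, exp_neg, exp_log (hv _ (by omega) (by omega) _),
      exp_log (hv _ (by omega) (by omega) _), ← hK]
    simp [Pmat, show i ≠ N + 2 by omega]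
  have hlin : ∀ c d : ℝ, HasDerivAt (fun t : ℝ => c + t * d) d 0 := fun c d => by
    simpa using ((hasDerivAt_id (0:ℝ)).mul_const d).const_add c
  have hder : HasDerivAt
      (fun t : ℝ => dualGen N m C a b ε (fun i j => ε * log (v i j) + t * h i j))
      ((∑ j, h 1 j * a j) + (∑ k, h (N+3) k * b k)
        - ε * ((∑ j, ∑ k, Pmat N m K v (N+2) j k * ((h (N+2) j + h (N+3) k) / ε))
          + ∑ i ∈ Finset.Icc 1 (N+1), ∑ j, ∑ k,
              Pmat N m K v i j k * ((h i j - h (i+1) k) / ε))) 0 := by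
    unfold dualGen
    refine HasDerivAt.sub (HasDerivAt.add ?_ ?_) (HasDerivAt.const_mul ε (HasDerivAt.add ?_ ?_))
    · exact HasDerivAt.fun_sum fun j _ => (hlin _ _).mul_const _
    · exact HasDerivAt.fun_sum fun j _ => (hlin _ _).mul_const _
    · refine HasDerivAt.fun_sum fun j _ => HasDerivAt.fun_sum fun k _ => ?_
      have := (((((hlin (ε * log (v (N+2) j)) (h (N+2) j)).add
        (hlin (ε * log (v (N+3) k)) (h (N+3) k))).sub_const (C (N+2) j k)).div_const ε)).exp
      simpa [hlast] using this
    · refine HasDerivAt.fun_sum fun i hi => HasDerivAt.fun_sum fun j _ =>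
        HasDerivAt.fun_sum fun k _ => ?_
      have := (((((hlin (ε * log (v i j)) (h i j)).sub
        (hlin (ε * log (v (i+1) k)) (h (i+1) k))).sub_const (C i j k)).div_const ε)).exp
      simpa [hmid i hi] using this
  have hmax : IsLocalMax
      (fun t : ℝ => dualGen N m C a b ε (fun i j => ε * log (v i j) + t * h i j)) 0 :=
    Filter.Eventually.of_forall fun t => by simpa using hopt _
  have h0 := hmax.hasDerivAt_eq_zero hder
  rw [← h0]
  have hε' := hε.ne'
  congr 1
  rw [mul_add, mul_sum, mul_sum]
  congr 1
  · refine sum_congr rfl fun j _ => ?_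
    rw [mul_sum]
    exact sum_congr rfl fun k _ => by field_simp
  · refine sum_congr rfl fun i _ => ?_
    rw [mul_sum]
    refine sum_congr rfl fun j _ => ?_
    rw [mul_sum]
    exact sum_congr rfl fun k _ => by field_simp

/-- The plans induced by a dual maximiser have first marginal `a`, last marginal `b`, and agree
on the inner marginals. -/
lemma feasibleT_of_dual_optimal {C K : ∀ i : ℕ, Matrix (Fin (m i)) (Fin (m (i+1))) ℝ}
    {a : Fin (m 1) → ℝ} {b : Fin (m (N+3)) → ℝ} {ε : ℝ} (hε : 0 < ε)
    (hK : ∀ i j k, K i j k = Real.exp (-C i j k / ε))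
    {v : ∀ i : ℕ, Fin (m i) → ℝ} (hv : ∀ i : ℕ, 1 ≤ i → i ≤ N + 3 → ∀ j, 0 < v i j)
    (hopt : ∀ g : ∀ i : ℕ, Fin (m i) → ℝ,
      dualGen N m C a b ε g ≤ dualGen N m C a b ε (fun i j => ε * Real.log (v i j))) :
    FeasibleT N m a b (Pmat N m K v) := by
  set P := Pmat N m K v with hP
  have hrow : ∀ (i : ℕ) (x : Fin (m i) → ℝ),
      ∑ j, ∑ k, P i j k * x j = ∑ j, x j * (P i *ᵥ fun _ => 1) j := fun i x =>
    sum_congr rfl fun j _ => by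
      simp only [mulVec, dotProduct, mul_one, mul_sum, mul_comm]
  have hcol : ∀ (i : ℕ) (x : Fin (m (i+1)) → ℝ),
      ∑ j, ∑ k, P i j k * x k = ∑ k, x k * ((P i)ᵀ *ᵥ fun _ => 1) k := fun i x => by
    rw [sum_comm]
    exact sum_congr rfl fun j _ => by
      simp only [mulVec, dotProduct, mul_one, mul_sum, mul_comm, transpose_apply]
  have key : ∀ h : ∀ i : ℕ, Fin (m i) → ℝ,
      (∑ j, h 1 j * a j) + (∑ k, h (N+3) k * b k)
        - ((∑ j, h (N+2) j * (P (N+2) *ᵥ fun _ => 1) j)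
          + (∑ k, h (N+3) k * ((P (N+2))ᵀ *ᵥ fun _ => 1) k)
          + ∑ i ∈ Finset.Icc 1 (N+1), ((∑ j, h i j * (P i *ᵥ fun _ => 1) j)
            - ∑ k, h (i+1) k * ((P i)ᵀ *ᵥ fun _ => 1) k)) = 0 := by
    intro h
    have := first_variation_eq_zero hε hK hv hopt h
    rw [← hP] at this
    simp only [mul_add, mul_sub, sum_add_distrib, sum_sub_distrib] at this
    simp only [hrow, hcol] at this
    simp only [sum_sub_distrib]
    exact this
  -- The test direction supported on the single coordinate `(i₀, j₀)`.
  let δ : (i₀ j₀ : ℕ) → ∀ i : ℕ, Fin (m i) → ℝ :=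
    fun i₀ j₀ i j => if i = i₀ ∧ (j : ℕ) = j₀ then 1 else 0
  have hδ : ∀ (i₀ : ℕ) (j₀ : Fin (m i₀)) (x : Fin (m i₀) → ℝ),
      ∑ j, δ i₀ j₀ i₀ j * x j = x j₀ := by
    intro i₀ j₀ x
    rw [sum_eq_single j₀]
    · simp [δ]
    · intro j _ hj
      simp [δ, Fin.val_eq_val, hj]
    · simp
  have hδ0 : ∀ (i₀ j₀ i : ℕ) (x : Fin (m i) → ℝ), i ≠ i₀ → ∑ j, δ i₀ j₀ i j * x j = 0 := by
    intro i₀ j₀ i x hi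
    simp [δ, hi]
  refine ⟨funext fun j => ?_, funext fun k => ?_, fun i hi1 hi2 => funext fun k => ?_⟩
  · have h := key (δ 1 j)
    rw [hδ, hδ0 _ _ (N+3) _ (by omega), hδ0 _ _ (N+2) _ (by omega),
      hδ0 _ _ (N+3) _ (by omega), sum_eq_single 1] at h
    · rw [hδ, hδ0 _ _ (1+1) _ (by omega)] at h
      linarith
    · intro i hi h1
      rw [Finset.mem_Icc] at hi
      rw [hδ0 _ _ i _ (by omega), hδ0 _ _ (i+1) _ (by omega), sub_zero]
    · simp
  · have h := key (δ (N+3) k)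
    rw [hδ, hδ0 _ _ 1 _ (by omega), hδ0 _ _ (N+2) _ (by omega), hδ, sum_eq_zero] at h
    · linarith
    · intro i hi
      rw [Finset.mem_Icc] at hi
      rw [hδ0 _ _ i _ (by omega), hδ0 _ _ (i+1) _ (by omega), sub_zero]
  · have h := key (δ (i+1) k)
    rw [hδ0 _ _ 1 _ (by omega), hδ0 _ _ (N+3) _ (by omega), hδ0 _ _ (N+3) _ (by omega)] at h
    rw [sum_sub_distrib, sum_eq_single (s := Finset.Icc 1 (N+1)) i
      (f := fun i' => ∑ k', δ (i+1) k (i'+1) k' * ((P i')ᵀ *ᵥ fun _ => 1) k')] at h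
    · rw [hδ] at h
      -- The row marginal at `i + 1` comes from the last plan if `i = N + 1`, and otherwise from
      -- the sum over the other plans.
      rcases eq_or_lt_of_le hi2 with rfl | hlt
      · rw [hδ, sum_eq_zero] at h
        · linarith
        · intro i hi
          rw [Finset.mem_Icc] at hi
          exact hδ0 _ _ i _ (by omega)
      · rw [hδ0 _ _ (N+2) _ (by omega), sum_eq_single (i+1), hδ] at h
        · linarith
        · intro i' _ h1
          exact hδ0 _ _ i' _ h1
        · intro h1
          exact absurd (Finset.mem_Icc.2 ⟨by omega, by omega⟩) h1
    · intro i' _ h1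
      exact hδ0 _ _ (i'+1) _ (by omega)
    · intro h1
      exact absurd (Finset.mem_Icc.2 ⟨by omega, by omega⟩) h1

end Optimality

/-! ### Contraction of the Sinkhorn iteration -/

lemma rightScaling_pos {N : ℕ} {m : ℕ → ℕ} {u : ∀ i : ℕ, Fin (m i) → ℝ} {i : ℕ}
    (hu : ∀ j, 0 < u i j) (j : Fin (m i)) : 0 < rightScaling N m u i j := by
  unfold rightScaling
  split_ifs
  · exact hu j
  · exact inv_pos.2 (hu j)

lemma dH_rightScaling_le {N : ℕ} {m : ℕ → ℕ} {u v : ∀ i : ℕ, Fin (m i) → ℝ} {i : ℕ}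
    (hm : 0 < m i) (hu : ∀ j, 0 < u i j) (hv : ∀ j, 0 < v i j) :
    dH (rightScaling N m u i) (rightScaling N m v i) ≤ dH (u i) (v i) := by
  unfold rightScaling
  split_ifs
  · exact le_rfl
  · exact dH_inv_le hm hu hv

/-- The boundary discrepancy at an inner index is twice the distance from the current scaling
vector to its successor `√(p/q)`, hence is controlled by the distances of both to a third
vector `w`. -/
lemma dH_marginals_le {m : ℕ} (hm : 0 < m) {p q x y w : Fin m → ℝ} (hp : ∀ i, 0 < p i)
    (hq : ∀ i, 0 < q i) (hx : ∀ i, 0 < x i) (hw : ∀ i, 0 < w i)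
    (hy : y = fun i => √(p i / q i)) :
    dH (fun i => (x i)⁻¹ * p i) (fun i => x i * q i) ≤ 2 * (dH y w + dH x w) := by
  have hy0 : ∀ i, 0 < y i := fun i => by
    rw [hy]; exact sqrt_pos.2 (div_pos (hp i) (hq i))
  have hly : ∀ i, log (y i) = (log (p i) - log (q i)) / 2 := fun i => by
    rw [hy]
    simp only [log_sqrt (div_pos (hp i) (hq i)).le, log_div (hp i).ne' (hq i).ne']
  refine (dH_le_iff hm (fun i => mul_pos (inv_pos.2 (hx i)) (hp i))
    (fun i => mul_pos (hx i) (hq i)) _).2 fun i j => ?_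
  have h1 := log_osc_le_dH hy0 hw i j
  have h2 := log_osc_le_dH hx hw j i
  rw [hly, hly] at h1
  simp only [log_mul (inv_pos.2 (hx _)).ne' (hp _).ne', log_mul (hx _).ne' (hq _).ne', log_inv]
  linarith

/-- **Convergence of the marginals for general `M ≥ 2`** (Prop. 3.9, with `M = N + 2`):
the edge marginals of the induced matrices equal `a` and `b`, and every boundary
discrepancy is bounded by `2e(1 + E)E^{n−1}`. -/
theorem sinkhorn_marginal_convergence_general
    (N : ℕ) (m : ℕ → ℕ) (hm : ∀ i, 0 < m i)
    (C : ∀ i : ℕ, Matrix (Fin (m i)) (Fin (m (i+1))) ℝ)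
    (hC : ∀ i, ∀ j k, 0 ≤ C i j k)
    (a : Fin (m 1) → ℝ) (b : Fin (m (N+3)) → ℝ)
    (ha : ∀ j, 0 < a j) (hb : ∀ k, 0 < b k)
    (hasum : ∑ j, a j = 1) (hbsum : ∑ k, b k = 1)
    (ε : ℝ) (hε : 0 < ε)
    (K : ∀ i : ℕ, Matrix (Fin (m i)) (Fin (m (i+1))) ℝ)
    (hK : ∀ i j k, K i j k = Real.exp (-C i j k / ε))
    (u : ℕ → ∀ i : ℕ, Fin (m i) → ℝ)
    (hu0 : ∀ i : ℕ, 1 ≤ i → i ≤ N + 3 → ∀ j, 0 < u 0 i j)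
    (hrecMid : ∀ n : ℕ, ∀ i : ℕ, 1 ≤ i → i ≤ N →
      u (n+1) (i+1) = fun j => Real.sqrt (((K i)ᵀ *ᵥ u n i) j /
        (K (i+1) *ᵥ fun k => (u n (i+2) k)⁻¹) j))
    (hrecM : ∀ n : ℕ, u (n+1) (N+2) = fun j =>
      Real.sqrt (((K (N+1))ᵀ *ᵥ u n (N+1)) j / (K (N+2) *ᵥ u n (N+3)) j))
    (hrecFirst : ∀ n : ℕ, u (n+1) 1 = fun j =>
      a j / (K 1 *ᵥ fun k => (u (n+1) 2 k)⁻¹) j)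
    (hrecLast : ∀ n : ℕ, u (n+1) (N+3) = fun k =>
      b k / ((K (N+2))ᵀ *ᵥ u (n+1) (N+2)) k)
    (uhat : ∀ i : ℕ, Fin (m i) → ℝ)
    (huhat : ∀ i : ℕ, 1 ≤ i → i ≤ N + 3 → ∀ j, 0 < uhat i j)
    (hopt : ∀ g : ∀ i : ℕ, Fin (m i) → ℝ,
      dualGen N m C a b ε g ≤ dualGen N m C a b ε (fun i j => ε * Real.log (uhat i j)))
    (E e : ℝ)
    (hE : E = (Finset.Icc 1 (N+2)).sup'
      (Finset.nonempty_Icc.mpr (by omega)) (fun i => birkhoffLambda (K i)))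
    (he : e = (Finset.Icc 1 (N+3)).sup'
      (Finset.nonempty_Icc.mpr (by omega)) (fun i => dH (u 0 i) (uhat i))) :
    ∀ n : ℕ, 1 ≤ n →
      dH a (Pmat N m K (u n) 1 *ᵥ fun _ => 1) = 0 ∧
      dH b ((Pmat N m K (u n) (N+2))ᵀ *ᵥ fun _ => 1) = 0 ∧
      ∀ i : ℕ, 1 ≤ i → i ≤ N + 1 →
        dH ((Pmat N m K (u n) i)ᵀ *ᵥ fun _ => 1)
            (Pmat N m K (u n) (i+1) *ᵥ fun _ => 1)
          ≤ 2 * e * (1 + E) * E ^ (n - 1) := by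
  have hKpos : ∀ i j k, 0 < K i j k := fun i j k => by rw [hK]; exact exp_pos _
  have hKTpos : ∀ i j k, 0 < (K i)ᵀ j k := fun i j k => hKpos i k j
  -- The two inner update rules in uniform notation.
  have hrec : ∀ n i : ℕ, 1 ≤ i → i ≤ N + 1 →
      u (n+1) (i+1) = fun j => √(((K i)ᵀ *ᵥ u n i) j /
        (K (i+1) *ᵥ rightScaling N m (u n) (i+2)) j) := by
    intro n i h1 h2
    rcases eq_or_lt_of_le h2 with rfl | hlt
    · have hw : rightScaling N m (u n) (N+1+2) = u n (N+3) := by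
        funext k; simp [rightScaling]
      rw [hw]
      exact hrecM n
    · have hw : rightScaling N m (u n) (i+2) = fun k => (u n (i+2) k)⁻¹ := by
        funext k; simp [rightScaling, show i ≠ N + 1 by omega]
      rw [hw]
      exact hrecMid n i h1 (by omega)
  have hw2 : ∀ v : ∀ i : ℕ, Fin (m i) → ℝ, rightScaling N m v 2 = fun k => (v 2 k)⁻¹ := by
    intro v; funext k; simp [rightScaling]
  have hwlast : ∀ v : ∀ i : ℕ, Fin (m i) → ℝ, rightScaling N m v (N+3) = v (N+3) := by
    intro v; funext k; simp [rightScaling]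
  have hpos : ∀ n i : ℕ, 1 ≤ i → i ≤ N + 3 → ∀ j, 0 < u n i j := by
    intro n
    induction n with
    | zero => exact hu0
    | succ n ih =>
      have hin : ∀ i, 1 ≤ i → i ≤ N + 1 → ∀ j, 0 < u (n+1) (i+1) j := by
        intro i h1 h2 j
        rw [hrec n i h1 h2]
        exact sqrt_pos.2 (div_pos
          (mulVec_pos_of_pos (hm _) (hKTpos i) (ih i h1 (by omega)) j)
          (mulVec_pos_of_pos (hm _) (hKpos (i+1))
            (rightScaling_pos (ih (i+2) (by omega) (by omega))) j))
      intro i h1 h2 j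
      rcases eq_or_lt_of_le h1 with rfl | h1'
      · rw [hrecFirst]
        exact div_pos (ha j) (mulVec_pos_of_pos (hm _) (hKpos 1)
          (fun k => inv_pos.2 (hin 1 le_rfl (by omega) k)) j)
      · rcases eq_or_lt_of_le h2 with rfl | h2'
        · rw [hrecLast]
          exact div_pos (hb j) (mulVec_pos_of_pos (hm _) (hKTpos (N+2))
            (hin (N+1) (by omega) le_rfl) j)
        · obtain ⟨i, rfl⟩ : ∃ i', i = i' + 1 := ⟨i - 1, by omega⟩
          exact hin i (by omega) (by omega) j
  -- Optimality makes `uhat` a fixed point of all the update rules.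
  obtain ⟨hfa, hfb, hfmid⟩ := feasibleT_of_dual_optimal hε hK huhat hopt
  have hhatFirst : uhat 1 = fun j => a j / (K 1 *ᵥ rightScaling N m uhat 2) j := by
    funext j
    have h := congrFun hfa j
    rw [Pmat_mulVec_one] at h
    rw [eq_div_iff (mulVec_pos_of_pos (hm _) (hKpos 1)
      (rightScaling_pos (huhat 2 (by omega) (by omega))) j).ne']
    exact h
  have hhatLast : uhat (N+3) = fun k => b k / ((K (N+2))ᵀ *ᵥ uhat (N+2)) k := by
    funext k
    have h := congrFun hfb k
    rw [Pmat_transpose_mulVec_one] at h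
    rw [eq_div_iff (mulVec_pos_of_pos (hm _) (hKTpos (N+2))
      (huhat (N+2) (by omega) (by omega)) k).ne']
    rw [hwlast] at h
    exact h
  have hhatMid : ∀ i : ℕ, 1 ≤ i → i ≤ N + 1 →
      uhat (i+1) = fun j => √(((K i)ᵀ *ᵥ uhat i) j /
        (K (i+1) *ᵥ rightScaling N m uhat (i+2)) j) := by
    intro i h1 h2
    funext j
    have h := congrFun (hfmid i h1 h2) j
    rw [Pmat_mulVec_one, Pmat_transpose_mulVec_one] at h
    have hu := huhat (i+1) (by omega) (by omega) j
    have hq := mulVec_pos_of_pos (hm _) (hKpos (i+1))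
      (rightScaling_pos (N := N) (huhat (i+2) (by omega) (by omega))) j
    simp only [rightScaling, show i + 1 ≠ N + 3 by omega, if_false] at h
    symm
    rw [sqrt_eq_iff_mul_self_eq_of_pos hu, eq_div_iff hq.ne']
    rw [inv_mul_eq_iff_eq_mul₀ hu.ne'] at h
    rw [h, mul_assoc]
  have hlamE : ∀ i, 1 ≤ i → i ≤ N + 2 → birkhoffLambda (K i) ≤ E := fun i h1 h2 => by
    rw [hE]
    exact le_sup' (fun i => birkhoffLambda (K i)) (Finset.mem_Icc.2 ⟨h1, h2⟩)
  have hE0 : 0 ≤ E := (birkhoffLambda_nonneg (hm _) (hm _) (hKpos 1)).trans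
    (hlamE 1 le_rfl (by omega))
  have hE1 : E ≤ 1 := by
    rw [hE]
    exact sup'_le _ _ fun i _ => birkhoffLambda_le_one
  have he0i : ∀ i, 1 ≤ i → i ≤ N + 3 → dH (u 0 i) (uhat i) ≤ e := fun i h1 h2 => by
    rw [he]
    exact le_sup' (fun i => dH (u 0 i) (uhat i)) (Finset.mem_Icc.2 ⟨h1, h2⟩)
  have he0 : 0 ≤ e := (dH_nonneg (hm 1) (hu0 1 le_rfl (by omega))
    (huhat 1 le_rfl (by omega))).trans (he0i 1 le_rfl (by omega))
  -- Contraction by `E` of the kernel applied to a right scaling vector, and of its transpose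
  -- applied to a left one.
  have hcR : ∀ v : ∀ i : ℕ, Fin (m i) → ℝ, ∀ i, 1 ≤ i → i ≤ N + 2 → (∀ j, 0 < v (i+1) j) →
      dH (K i *ᵥ rightScaling N m v (i+1)) (K i *ᵥ rightScaling N m uhat (i+1))
        ≤ E * dH (v (i+1)) (uhat (i+1)) := by
    intro v i h1 h2 hv
    have hh := huhat (i+1) (by omega) (by omega)
    refine (dH_mulVec_le (hm _) (hm _) (hKpos i) (rightScaling_pos hv)
      (rightScaling_pos hh)).trans ?_
    exact mul_le_mul (hlamE i h1 h2) (dH_rightScaling_le (hm _) hv hh)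
      (dH_nonneg (hm _) (rightScaling_pos hv) (rightScaling_pos hh)) hE0
  have hcL : ∀ v : ∀ i : ℕ, Fin (m i) → ℝ, ∀ i, 1 ≤ i → i ≤ N + 2 → (∀ j, 0 < v i j) →
      dH ((K i)ᵀ *ᵥ v i) ((K i)ᵀ *ᵥ uhat i) ≤ E * dH (v i) (uhat i) := by
    intro v i h1 h2 hv
    have hh := huhat i (by omega) (by omega)
    refine (dH_mulVec_le (hm _) (hm _) (hKTpos i) hv hh).trans ?_
    rw [birkhoffLambda_transpose]
    exact mul_le_mul_of_nonneg_right (hlamE i h1 h2) (dH_nonneg (hm _) hv hh)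
  have hdist : ∀ n i : ℕ, 1 ≤ i → i ≤ N + 3 → dH (u n i) (uhat i) ≤ e * E ^ n := by
    intro n
    induction n with
    | zero => simpa using he0i
    | succ n ih =>
      have hin : ∀ i, 1 ≤ i → i ≤ N + 1 →
          dH (u (n+1) (i+1)) (uhat (i+1)) ≤ e * E ^ (n+1) := by
        intro i h1 h2
        have hp := hpos n i h1 (by omega)
        have hp2 := hpos n (i+2) (by omega) (by omega)
        have hh := huhat i h1 (by omega)
        have hh2 := huhat (i+2) (by omega) (by omega)
        rw [hrec n i h1 h2, hhatMid i h1 h2]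
        refine (dH_sqrt_div_le (hm _)
          (mulVec_pos_of_pos (hm _) (hKTpos i) hp)
          (mulVec_pos_of_pos (hm _) (hKpos (i+1)) (rightScaling_pos hp2))
          (mulVec_pos_of_pos (hm _) (hKTpos i) hh)
          (mulVec_pos_of_pos (hm _) (hKpos (i+1)) (rightScaling_pos hh2))).trans ?_
        have e1 := hcL (u n) i h1 (by omega) hp
        have e2 := hcR (u n) (i+1) (by omega) (by omega) hp2
        have e3 := mul_le_mul_of_nonneg_left (ih i h1 (by omega)) hE0
        have e4 := mul_le_mul_of_nonneg_left (ih (i+2) (by omega) (by omega)) hE0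
        have e5 : e * E ^ (n+1) = E * (e * E ^ n) := by ring
        rw [e5]
        linarith
      -- The outer vectors are computed from the new inner ones, so contract once more.
      have hout : ∀ d, d ≤ e * E ^ (n+1) → E * d ≤ e * E ^ (n+1) := fun d hd => by
        refine (mul_le_mul_of_nonneg_left hd hE0).trans ?_
        exact mul_le_of_le_one_left (by positivity) hE1
      intro i h1 h2
      rcases eq_or_lt_of_le h1 with rfl | h1'
      · have hp := hpos (n+1) 2 (by omega) (by omega)
        have hh := huhat 2 (by omega) (by omega)
        rw [hrecFirst n, hhatFirst, ← hw2]
        refine (dH_div_le (hm _) ha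
          (mulVec_pos_of_pos (hm _) (hKpos 1) (rightScaling_pos hp))
          (mulVec_pos_of_pos (hm _) (hKpos 1) (rightScaling_pos hh))).trans ?_
        exact (hcR (u (n+1)) 1 le_rfl (by omega) hp).trans (hout _ (hin 1 le_rfl (by omega)))
      · rcases eq_or_lt_of_le h2 with rfl | h2'
        · have hp := hpos (n+1) (N+2) (by omega) (by omega)
          have hh := huhat (N+2) (by omega) (by omega)
          rw [hrecLast n, hhatLast]
          refine (dH_div_le (hm _) hb
            (mulVec_pos_of_pos (hm _) (hKTpos (N+2)) hp)
            (mulVec_pos_of_pos (hm _) (hKTpos (N+2)) hh)).trans ?_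
          exact (hcL (u (n+1)) (N+2) (by omega) le_rfl hp).trans
            (hout _ (hin (N+1) (by omega) le_rfl))
        · obtain ⟨i, rfl⟩ : ∃ i', i = i' + 1 := ⟨i - 1, by omega⟩
          exact hin i (by omega) (by omega)
  intro n hn
  obtain ⟨n, rfl⟩ : ∃ n', n = n' + 1 := ⟨n - 1, by omega⟩
  refine ⟨?_, ?_, fun i h1 h2 => ?_⟩
  · have h : (Pmat N m K (u (n+1)) 1 *ᵥ fun _ => 1) = a := by
      funext j
      have hq := mulVec_pos_of_pos (hm _) (hKpos 1)
        (rightScaling_pos (N := N) (hpos (n+1) 2 (by omega) (by omega))) j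
      rw [Pmat_mulVec_one, hrecFirst n, ← hw2]
      exact div_mul_cancel₀ _ hq.ne'
    rw [h]
    exact dH_self (hm _) ha
  · have h : ((Pmat N m K (u (n+1)) (N+2))ᵀ *ᵥ fun _ => 1) = b := by
      funext k
      have hq := mulVec_pos_of_pos (hm _) (hKTpos (N+2))
        (hpos (n+1) (N+2) (by omega) (by omega)) k
      rw [Pmat_transpose_mulVec_one, hwlast, hrecLast n]
      exact div_mul_cancel₀ _ hq.ne'
    rw [h]
    exact dH_self (hm _) hb
  · have hP1 : ((Pmat N m K (u (n+1)) i)ᵀ *ᵥ fun _ => 1)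
        = fun j => (u (n+1) (i+1) j)⁻¹ * ((K i)ᵀ *ᵥ u (n+1) i) j := by
      funext j
      rw [Pmat_transpose_mulVec_one]
      simp [rightScaling, show i ≠ N + 2 by omega]
    have hP2 : (Pmat N m K (u (n+1)) (i+1) *ᵥ fun _ => 1)
        = fun j => u (n+1) (i+1) j * (K (i+1) *ᵥ rightScaling N m (u (n+1)) (i+2)) j :=
      funext fun j => Pmat_mulVec_one K (u (n+1)) (i+1) j
    rw [hP1, hP2]
    refine (dH_marginals_le (hm _)
      (mulVec_pos_of_pos (hm _) (hKTpos i) (hpos (n+1) i h1 (by omega)))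
      (mulVec_pos_of_pos (hm _) (hKpos (i+1))
        (rightScaling_pos (hpos (n+1) (i+2) (by omega) (by omega))))
      (hpos (n+1) (i+1) (by omega) (by omega)) (huhat (i+1) (by omega) (by omega))
      (hrec (n+1) i h1 h2)).trans ?_
    have d1 := hdist (n+1) (i+1) (by omega) (by omega)
    have d2 := hdist (n+1+1) (i+1) (by omega) (by omega)
    -- This gives the bound with exponent `n + 1`, which is stronger than required as `E ≤ 1`.
    have hpow : E ^ (n+1) ≤ E ^ n := pow_le_pow_of_le_one hE0 hE1 (by omega)
    calc 2 * (dH (u (n+1+1) (i+1)) (uhat (i+1)) + dH (u (n+1) (i+1)) (uhat (i+1)))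
        ≤ 2 * (e * E ^ (n+1+1) + e * E ^ (n+1)) := by linarith
      _ = 2 * e * (1 + E) * E ^ (n+1) := by ring
      _ ≤ 2 * e * (1 + E) * E ^ n := mul_le_mul_of_nonneg_left hpow (by positivity)
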